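/- arXiv:2012.02676 — 7 statements merged into one kernel-verified Lean document; each statement's English description precedes it below -/
import Mathlib

section
/- Let q ∈ ℝ^r with q_t ≤ 0 for every coordinate t. Then for every vector v ∈ ℝ^r with v ≥ 0 entrywise and ‖v‖₂ = 1, one has qᵀv ≤ max_t q_t. Consequently, a standard basis vector e(t*) with q_{t*} = max_t q_t maximizes qᵀv over the set {v ∈ ℝ^r : v ≥ 0 entrywise, ‖v‖₂ = 1, card(v) ≤ k} for any k ≥ 1. -/
/-- The number of nonzero entries of a vector `v ∈ ℝ^r`. -/
noncomputable def card {r : ℕ} (v : EuclideanSpace ℝ (Fin r)) : ℕ :=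
  {t | v t ≠ 0}.ncard

/-- If every coordinate of `q` is nonpositive, then for every entrywise
nonnegative unit vector `v`, `qᵀv ≤ max_t q_t`; consequently a standard basis vector
`e(t*)` at a maximal coordinate maximizes `qᵀv` over the feasible set
`{v : v ≥ 0, ‖v‖ = 1, card v ≤ k}` for any `k ≥ 1`. -/
theorem stmt_0 {r k : ℕ} (hr : 0 < r) (hk : 1 ≤ k)
    (q : EuclideanSpace ℝ (Fin r)) (hq : ∀ t, q t ≤ 0)
    (tstar : Fin r) (htstar : ∀ t, q t ≤ q tstar) :
    (∀ v : EuclideanSpace ℝ (Fin r), (∀ t, 0 ≤ v t) → ‖v‖ = 1 →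
      ∑ t, q t * v t ≤ q tstar) ∧
    ((∀ t, 0 ≤ (EuclideanSpace.single tstar (1 : ℝ)) t) ∧
      ‖(EuclideanSpace.single tstar (1 : ℝ))‖ = 1 ∧
      card (EuclideanSpace.single tstar (1 : ℝ)) ≤ k ∧
      ∀ v : EuclideanSpace ℝ (Fin r), (∀ t, 0 ≤ v t) → ‖v‖ = 1 → card v ≤ k →
        ∑ t, q t * v t ≤ ∑ t, q t * (EuclideanSpace.single tstar (1 : ℝ)) t) := by
  have key : ∀ v : EuclideanSpace ℝ (Fin r), (∀ t, 0 ≤ v t) → ‖v‖ = 1 →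
      ∑ t, q t * v t ≤ q tstar := by
    intro v hv hn
    have hsq : ∑ t, v t ^ 2 = 1 := by
      have h := EuclideanSpace.real_norm_sq_eq v
      rw [hn] at h
      linarith
    have hle : ∀ t, v t ≤ 1 := by
      intro t
      have h := Finset.single_le_sum (f := fun t => v t ^ 2)
        (fun i _ => sq_nonneg (v i)) (Finset.mem_univ t)
      simp only [hsq] at h
      nlinarith [hv t]
    have hsum : 1 ≤ ∑ t, v t := by
      rw [← hsq]
      exact Finset.sum_le_sum fun t _ => by nlinarith [hv t, hle t]
    calc ∑ t, q t * v t ≤ ∑ t, q tstar * v t :=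
          Finset.sum_le_sum fun t _ => mul_le_mul_of_nonneg_right (htstar t) (hv t)
      _ = q tstar * ∑ t, v t := by rw [Finset.mul_sum]
      _ ≤ q tstar := by nlinarith [hq tstar]
  refine ⟨key, ?_, ?_, ?_, ?_⟩
  · intro t
    by_cases h : t = tstar <;> simp [h]
  · simp
  · refine le_trans ?_ hk
    unfold card
    refine le_trans (Set.ncard_le_ncard (t := {tstar}) ?_) (by simp)
    intro t ht
    by_contra h
    simp at h
    simp [h] at ht
  · intro v hv hn _
    have h := key v hv hn
    simpa [Pi.single_apply] using h
end

section
/- Let q ∈ ℝ^r have at least one strictly positive entry, let 1 ≤ k ≤ r, and let v* be any maximizer of qᵀv over the set {v ∈ ℝ^r : v ≥ 0 entrywise, ‖v‖₂ = 1, card(v) ≤ k}. If a coordinate t satisfies q_t < q_[k], where q_[k] denotes the k-th largest value among the entries of q, then v*_t = 0. -/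
/-- The `k`-th largest entry (counted with multiplicity) of `q ∈ ℝ^r`:
the `(k-1)`-st element of the entries of `q` sorted in decreasing order. -/
noncomputable def kthLargest {r : ℕ} (q : EuclideanSpace ℝ (Fin r)) (k : ℕ) : ℝ :=
  ((Finset.univ.val.map fun t => q t).sort (· ≥ ·)).getD (k - 1) 0

/-- At least `k` entries are at least as large as the `k`-th largest one. -/
theorem kthLargest_count {r k : ℕ} (hk : 1 ≤ k) (hkr : k ≤ r)
    (q : EuclideanSpace ℝ (Fin r)) :
    k ≤ (Finset.univ.filter fun s => kthLargest q k ≤ q s).card := by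
  classical
  set L := (Finset.univ.val.map fun t => q t).sort (· ≥ ·) with hL
  have hlen : L.length = r := by simp [hL]
  have hlt : k - 1 < L.length := by omega
  have hkl : kthLargest q k = L[k - 1] := by
    unfold kthLargest
    rw [← hL, List.getD_eq_getElem _ _ hlt]
  have hsorted : L.Pairwise (· ≥ ·) := Multiset.pairwise_sort _ _
  have h1 : (L.take k).countP (fun x => decide (kthLargest q k ≤ x)) = k := by
    have h2 : (L.take k).countP (fun x => decide (kthLargest q k ≤ x)) = (L.take k).length := by
      rw [List.countP_eq_length]
      intro a ha
      obtain ⟨i, hi, rfl⟩ := List.getElem_of_mem ha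
      have hi' : i < k := by
        have := hi
        rw [List.length_take] at this
        omega
      rw [List.getElem_take, hkl]
      simp only [decide_eq_true_eq]
      rcases Nat.lt_or_ge i (k - 1) with h | h
      · exact List.pairwise_iff_getElem.1 hsorted i (k - 1) (by omega) hlt h
      · have : i = k - 1 := by omega
        subst this
        exact le_rfl
    rw [h2, List.length_take]
    omega
  have h3 : L.countP (fun x => decide (kthLargest q k ≤ x))
      = (Finset.univ.filter fun s => kthLargest q k ≤ q s).card := by
    rw [← Multiset.coe_countP (p := fun x => kthLargest q k ≤ x), hL, Multiset.sort_eq,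
      Multiset.countP_map]
    rfl
  rw [← h3]
  calc k = _ := h1.symm
    _ ≤ _ := (List.take_sublist k L).countP_le

/-- If `q` has a strictly positive entry, `1 ≤ k ≤ r`, and `v*` maximizes
`qᵀv` over `{v : v ≥ 0, ‖v‖ = 1, card v ≤ k}`, then `v*_t = 0` at every coordinate `t`
with `q_t < q_[k]`, where `q_[k]` is the `k`-th largest entry of `q`. -/
theorem stmt_2 {r k : ℕ} (hk : 1 ≤ k) (hkr : k ≤ r)
    (q : EuclideanSpace ℝ (Fin r)) (hq : ∃ t, 0 < q t)
    (vstar : EuclideanSpace ℝ (Fin r))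
    (hfeas : (∀ t, 0 ≤ vstar t) ∧ ‖vstar‖ = 1 ∧ card vstar ≤ k)
    (hmax : ∀ v : EuclideanSpace ℝ (Fin r),
      (∀ t, 0 ≤ v t) → ‖v‖ = 1 → card v ≤ k →
      ∑ t, q t * v t ≤ ∑ t, q t * vstar t) :
    ∀ t, q t < kthLargest q k → vstar t = 0 := by
  classical
  intro t ht
  by_contra hvt
  obtain ⟨hpos, hnorm, hcard⟩ := hfeas
  have hcount := kthLargest_count hk hkr q
  have hex : ∃ s, kthLargest q k ≤ q s ∧ vstar s = 0 := by
    by_contra hno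
    push Not at hno
    have hsub : insert t (Finset.univ.filter fun s => kthLargest q k ≤ q s) ⊆
        Finset.univ.filter fun s => vstar s ≠ 0 := by
      intro s hs
      simp only [Finset.mem_insert, Finset.mem_filter, Finset.mem_univ, true_and] at hs ⊢
      rcases hs with rfl | hs
      · exact hvt
      · exact hno s hs
    have h1 := Finset.card_le_card hsub
    rw [Finset.card_insert_of_notMem (by simpa using ht)] at h1
    have h2 : card vstar = (Finset.univ.filter fun s => vstar s ≠ 0).card := by
      unfold card
      rw [← Set.ncard_coe_finset]
      simp
    omega
  obtain ⟨s, hs, hvs⟩ := hex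
  have hst : s ≠ t := by
    rintro rfl
    exact hvt hvs
  let e : Equiv.Perm (Fin r) := Equiv.swap s t
  have hw := hmax (WithLp.toLp 2 fun i => vstar (e i)) (fun i => hpos _)
    (by
      rw [← hnorm, EuclideanSpace.norm_eq, EuclideanSpace.norm_eq]
      congr 1
      exact Equiv.sum_comp e fun i => ‖vstar i‖ ^ 2)
    (by
      refine le_trans (le_of_eq ?_) hcard
      unfold card
      exact Set.ncard_congr (fun i _ => e i) (fun i hi => hi)
        (fun i j _ _ h => e.injective h)
        (fun j hj => ⟨e.symm j, by simpa using hj, by simp⟩))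
  have hdiff : ∑ i, (q i * vstar (e i) - q i * vstar i) = (q s - q t) * vstar t := by
    rw [← Finset.sum_subset (Finset.subset_univ {s, t}), Finset.sum_pair hst]
    · simp only [e, Equiv.swap_apply_left, Equiv.swap_apply_right, hvs]
      ring
    · intro i _ hi
      simp only [Finset.mem_insert, Finset.mem_singleton, not_or] at hi
      simp only [e, Equiv.swap_apply_of_ne_of_ne hi.1 hi.2, sub_self]
  rw [Finset.sum_sub_distrib] at hdiff
  have hp : 0 < (q s - q t) * vstar t :=
    mul_pos (by linarith) (lt_of_le_of_ne (hpos t) (Ne.symm hvt))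
  have hw' : ∑ i, q i * vstar (e i) ≤ ∑ i, q i * vstar i := hw
  linarith
end

section
/- Let Ω ⊆ ℝ^d be a nonempty closed set, let x, q ∈ ℝ^d, and let α > 1 be a scalar. Suppose y₁ ∈ Ω minimizes ‖y − (x + q)‖₂ over y ∈ Ω, and y_α ∈ Ω minimizes ‖y − (x + αq)‖₂ over y ∈ Ω. Then qᵀ(y_α − y₁) ≥ 0. -/
/-- Lemma 1 of the paper: For a nonempty closed set `Ω ⊆ ℝ^d`, points
`x, q ∈ ℝ^d` and a scalar `α > 1`, if `y₁` is a projection of `x + q` onto `Ω` and `y_α`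
is a projection of `x + αq` onto `Ω`, then `qᵀ(y_α − y₁) ≥ 0`. -/
theorem stmt_5 {d : ℕ} (Ω : Set (EuclideanSpace ℝ (Fin d)))
    (hΩclosed : IsClosed Ω) (hΩne : Ω.Nonempty)
    (x q : EuclideanSpace ℝ (Fin d)) (α : ℝ) (hα : 1 < α)
    (y₁ : EuclideanSpace ℝ (Fin d)) (hy₁ : y₁ ∈ Ω)
    (hy₁min : ∀ y ∈ Ω, ‖y₁ - (x + q)‖ ≤ ‖y - (x + q)‖)
    (yα : EuclideanSpace ℝ (Fin d)) (hyα : yα ∈ Ω)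
    (hyαmin : ∀ y ∈ Ω, ‖yα - (x + α • q)‖ ≤ ‖y - (x + α • q)‖) :
    0 ≤ ∑ t, q t * (yα t - y₁ t) := by
  have h1 := pow_le_pow_left₀ (norm_nonneg _) (hy₁min yα hyα) 2
  have h2 := pow_le_pow_left₀ (norm_nonneg _) (hyαmin y₁ hy₁) 2
  simp only [EuclideanSpace.real_norm_sq_eq, PiLp.sub_apply, PiLp.add_apply, PiLp.smul_apply,
    smul_eq_mul] at h1 h2
  have key : 2 * (α - 1) * ∑ t, q t * (yα t - y₁ t) =
      ((∑ t, (yα t - (x t + q t)) ^ 2) - ∑ t, (y₁ t - (x t + q t)) ^ 2) +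
      ((∑ t, (y₁ t - (x t + α * q t)) ^ 2) - ∑ t, (yα t - (x t + α * q t)) ^ 2) := by
    rw [← Finset.sum_sub_distrib, ← Finset.sum_sub_distrib, ← Finset.sum_add_distrib,
      Finset.mul_sum]
    refine Finset.sum_congr rfl fun t _ => ?_
    ring
  have hpos : 0 < 2 * (α - 1) := by linarith
  refine nonneg_of_mul_nonneg_right ?_ hpos
  rw [key]
  linarith
end

section
/- Let Ω be a nonempty closed subset of the unit sphere {u ∈ ℝ^d : ‖u‖₂ = 1}, let v ∈ Ω, let q ∈ ℝ^d, let v⁺ ∈ Ω be a maximizer of qᵀu over u ∈ Ω, and let y ∈ Ω be any minimizer of ‖u − (v + q)‖₂ over u ∈ Ω. Then ‖y − v‖₂² ≤ 2 qᵀ(v⁺ − v). -/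
/-- Let `Ω` be a nonempty closed subset of the unit sphere of `ℝ^d`,
`v ∈ Ω`, `q ∈ ℝ^d`, `v⁺ ∈ Ω` a maximizer of `qᵀu` over `Ω`, and `y` any projection of
`v + q` onto `Ω`. Then `‖y − v‖² ≤ 2 qᵀ(v⁺ − v)`. -/
theorem stmt_8 {d : ℕ} (Ω : Set (EuclideanSpace ℝ (Fin d)))
    (hΩclosed : IsClosed Ω) (hΩne : Ω.Nonempty)
    (hΩsphere : ∀ u ∈ Ω, ‖u‖ = 1)
    (v : EuclideanSpace ℝ (Fin d)) (hv : v ∈ Ω)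
    (q : EuclideanSpace ℝ (Fin d))
    (vplus : EuclideanSpace ℝ (Fin d)) (hvplus : vplus ∈ Ω)
    (hvplusmax : ∀ u ∈ Ω, ∑ t, q t * u t ≤ ∑ t, q t * vplus t)
    (y : EuclideanSpace ℝ (Fin d)) (hy : y ∈ Ω)
    (hymin : ∀ u ∈ Ω, ‖y - (v + q)‖ ≤ ‖u - (v + q)‖) :
    ‖y - v‖ ^ 2 ≤ 2 * ∑ t, q t * (vplus t - v t) := by
  have hin : inner ℝ (y - v) q = ∑ t, q t * (y t - v t) := by
    simp [PiLp.inner_apply]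
  have h1 := hymin v hv
  have h2 : ‖v - (v + q)‖ = ‖q‖ := by
    rw [show v - (v + q) = -q by abel, norm_neg]
  have h3 : y - (v + q) = (y - v) - q := by abel
  rw [h2, h3] at h1
  have h4 := norm_sub_sq_real (y - v) q
  have h5 : ‖(y - v) - q‖ ^ 2 ≤ ‖q‖ ^ 2 := by gcongr
  have h6 := hvplusmax y hy
  rw [hin] at h4
  simp only [mul_sub, Finset.sum_sub_distrib] at h4 ⊢
  linarith
end

section
/- Let n, r, k be positive integers with k ≤ r, let b ∈ ℝ^{n×n} be symmetric, and let m > 0. Let Q(V) = (1/2m) Σ_{i,j} b_{ij} ⟨vᵢ, vⱼ⟩ and Ωᵢ = {v ∈ ℝ^r : v ≥ 0 entrywise, ‖v‖₂ = 1, card(v) ≤ k}. Fix a feasible V (each vᵢ ∈ Ωᵢ). For each i let gᵢ = (1/m) Σ_{j≠i} b_{ij} vⱼ, let V^{(i)} denote V with block i replaced by any maximizer vᵢ⁺ of ⟨gᵢ, u⟩ over u ∈ Ωᵢ, and let yᵢ ∈ Ωᵢ be any minimizer of ‖u − (vᵢ + gᵢ)‖₂ over u ∈ Ωᵢ. Then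 Σ_{i=1}^n ‖yᵢ − vᵢ‖₂² ≤ 2 Σ_{i=1}^n (Q(V^{(i)}) − Q(V)). -/
/-- The per-block feasible set `Ωᵢ = {v ∈ ℝ^r : v ≥ 0, ‖v‖ = 1, card v ≤ k}`. -/
def feas (r k : ℕ) : Set (EuclideanSpace ℝ (Fin r)) :=
  {v | (∀ t, 0 ≤ v t) ∧ ‖v‖ = 1 ∧ card v ≤ k}

/-- The generalized modularity objective `Q(V) = (1/2m) Σ_{i,j} b_{ij} ⟨vᵢ, vⱼ⟩`. -/
noncomputable def Qfun {n r : ℕ} (b : Fin n → Fin n → ℝ) (m : ℝ)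
    (V : Fin n → EuclideanSpace ℝ (Fin r)) : ℝ :=
  (1 / (2 * m)) * ∑ i, ∑ j, b i j * ∑ t, V i t * V j t

/-- The block gradient `gᵢ = (1/m) Σ_{j≠i} b_{ij} vⱼ` of `Q` with respect to block `i`. -/
noncomputable def gradBlock {n r : ℕ} (b : Fin n → Fin n → ℝ) (m : ℝ)
    (V : Fin n → EuclideanSpace ℝ (Fin r)) (i : Fin n) : EuclideanSpace ℝ (Fin r) :=
  (1 / m) • ∑ j ∈ Finset.univ.erase i, b i j • V j

theorem sum_mul_eq_inner {r : ℕ} (x z : EuclideanSpace ℝ (Fin r)) :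
    ∑ t, x t * z t = inner ℝ x z := by
  simp [PiLp.inner_apply, mul_comm]

theorem Qfun_update {n r : ℕ} (b : Fin n → Fin n → ℝ) (hb : ∀ i j, b i j = b j i) (m : ℝ)
    (hm : 0 < m) (V : Fin n → EuclideanSpace ℝ (Fin r)) (i : Fin n)
    (u : EuclideanSpace ℝ (Fin r)) (hu : ‖u‖ = 1) :
    Qfun b m (Function.update V i u) = inner ℝ (gradBlock b m V i) u +
      (1 / (2 * m)) * (b i i + ∑ a ∈ Finset.univ.erase i, ∑ c ∈ Finset.univ.erase i,
        b a c * inner ℝ (V a) (V c)) := by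
  unfold Qfun gradBlock
  simp only [sum_mul_eq_inner]
  have key : ∀ f : Fin n → ℝ, ∑ a, f a = f i + ∑ a ∈ Finset.univ.erase i, f a := fun f =>
    (Finset.add_sum_erase _ f (Finset.mem_univ i)).symm
  have e1 : ∀ a ∈ Finset.univ.erase i, Function.update V i u a = V a := fun a ha =>
    Function.update_of_ne (Finset.ne_of_mem_erase ha) _ _
  have h1 : ∑ c ∈ Finset.univ.erase i, b i c * inner ℝ u (Function.update V i u c)
      = ∑ c ∈ Finset.univ.erase i, b i c * inner ℝ (V c) u :=
    Finset.sum_congr rfl fun c hc => by rw [e1 c hc, real_inner_comm]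
  have h2 : ∑ a ∈ Finset.univ.erase i,
        ∑ c, b a c * inner ℝ (Function.update V i u a) (Function.update V i u c)
      = ∑ a ∈ Finset.univ.erase i, b i a * inner ℝ (V a) u
        + ∑ a ∈ Finset.univ.erase i, ∑ c ∈ Finset.univ.erase i,
          b a c * inner ℝ (V a) (V c) := by
    rw [← Finset.sum_add_distrib]
    refine Finset.sum_congr rfl fun a ha => ?_
    rw [key, e1 a ha, Function.update_self, hb a i]
    congr 1
    exact Finset.sum_congr rfl fun c hc => by rw [e1 c hc]
  rw [key, h2, key, Function.update_self, h1, real_inner_self_eq_norm_sq, hu,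
    real_inner_smul_left, sum_inner]
  simp only [real_inner_smul_left]
  field_simp
  ring

/-- deterministic one-step progress bound of Theorem 1: With `V` feasible,
`vᵢ⁺` any maximizer of `⟨gᵢ, u⟩` over `Ωᵢ`, `V^{(i)}` the configuration `V` with block `i`
replaced by `vᵢ⁺`, and `yᵢ` any projection of `vᵢ + gᵢ` onto `Ωᵢ`, one has
`Σᵢ ‖yᵢ − vᵢ‖² ≤ 2 Σᵢ (Q(V^{(i)}) − Q(V))`. -/
theorem stmt_15 {n r k : ℕ} (hn : 0 < n) (hr : 0 < r) (hk : 0 < k) (hkr : k ≤ r)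
    (b : Fin n → Fin n → ℝ) (hb : ∀ i j, b i j = b j i) (m : ℝ) (hm : 0 < m)
    (V : Fin n → EuclideanSpace ℝ (Fin r)) (hfeas : ∀ i, V i ∈ feas r k)
    (vplus : Fin n → EuclideanSpace ℝ (Fin r))
    (hvplusmem : ∀ i, vplus i ∈ feas r k)
    (hvplusmax : ∀ i, ∀ u ∈ feas r k,
      ∑ t, gradBlock b m V i t * u t ≤ ∑ t, gradBlock b m V i t * vplus i t)
    (y : Fin n → EuclideanSpace ℝ (Fin r))
    (hymem : ∀ i, y i ∈ feas r k)
    (hymin : ∀ i, ∀ u ∈ feas r k,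
      ‖y i - (V i + gradBlock b m V i)‖ ≤ ‖u - (V i + gradBlock b m V i)‖) :
    ∑ i, ‖y i - V i‖ ^ 2 ≤
      2 * ∑ i, (Qfun b m (Function.update V i (vplus i)) - Qfun b m V) := by
  rw [Finset.mul_sum]
  refine Finset.sum_le_sum fun i _ => ?_
  have hV := Qfun_update b hb m hm V i (V i) (hfeas i).2.1
  rw [Function.update_eq_self] at hV
  rw [Qfun_update b hb m hm V i (vplus i) (hvplusmem i).2.1, hV]
  have h1 := hvplusmax i (y i) (hymem i)
  rw [sum_mul_eq_inner, sum_mul_eq_inner] at h1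
  have h2 := hymin i (V i) (hfeas i)
  rw [← sub_sub, sub_add_cancel_left, norm_neg] at h2
  have h3 := pow_le_pow_left₀ (norm_nonneg _) h2 2
  rw [norm_sub_sq_real, inner_sub_left, real_inner_comm, real_inner_comm _ (V i)] at h3
  linarith
end

section
/- Let n, r, k be positive integers with k ≤ r, let b ∈ ℝ^{n×n} be symmetric, and let m > 0. Let Q(V) = (1/2m) Σ_{i,j} b_{ij} ⟨vᵢ, vⱼ⟩, let Ωᵢ = {v ∈ ℝ^r : v ≥ 0 entrywise, ‖v‖₂ = 1, card(v) ≤ k}, let Ω = Ω₁ × ⋯ × Ωₙ, and let Q* = max_{V∈Ω} Q(V). For V ∈ Ω define the projected gradient grad(V) = P_Ω(V + ∇Q(V)) − V, where ∇Q(V) has blocks gᵢ = (1/m) Σ_{j≠i} b_{ij} vⱼ and P_Ω is any (measurable) blockwise selection of Euclidean projections onto Ω. Let i₀, i₁, i₂, … be independent uniformly random indices in {1,…,n}, let V⁰ ∈ Ω, and define V^{t+1} to agree with V^t except in block i_t, where V^{t+1}_{i_t} is an exact maximizer of Q over Ω_{i_t} with the other blocks fixed (given by a fixed measurable selection). Then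 for every T ≥ 1, min_{0≤t<T} E[‖grad(V^t)‖₂²] ≤ (2n/T) (Q* − Q(V⁰)); in particular the expected squared projected gradient converges to zero at rate O(1/T). -/
/-- The iterate of exact blockwise coordinate ascent along a list of coordinate indices:
at each step the block given by the next index is replaced by the exact maximizer
(given by the selection `sel`) of `Q` over that block with all other blocks fixed. -/
noncomputable def iter {n r : ℕ}
    (sel : (Fin n → EuclideanSpace ℝ (Fin r)) → Fin n → EuclideanSpace ℝ (Fin r))
    (V0 : Fin n → EuclideanSpace ℝ (Fin r)) (l : List (Fin n)) :
    Fin n → EuclideanSpace ℝ (Fin r) :=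
  l.foldl (fun W i => Function.update W i (sel W i)) V0

/-- The squared norm of the projected gradient `grad(V) = P_Ω(V + ∇Q(V)) − V`, where
the projection onto the product set `Ω = Ω₁ × ⋯ × Ωₙ` is taken blockwise via the
projection selection `proj`, and `‖V‖² = Σᵢ ‖vᵢ‖²` on `(ℝ^r)^n`. -/
noncomputable def gradNormSq {n r : ℕ} (b : Fin n → Fin n → ℝ) (m : ℝ)
    (proj : Fin n → EuclideanSpace ℝ (Fin r) → EuclideanSpace ℝ (Fin r))
    (V : Fin n → EuclideanSpace ℝ (Fin r)) : ℝ :=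
  ∑ i, ‖proj i (V i + gradBlock b m V i) - V i‖ ^ 2

theorem inner_eq_sum' {r : ℕ} (x y : EuclideanSpace ℝ (Fin r)) :
    ∑ t, x t * y t = inner ℝ x y := by
  simp [PiLp.inner_apply, mul_comm]

theorem Q_split {n r : ℕ} (b : Fin n → Fin n → ℝ) (hb : ∀ i j, b i j = b j i) (m : ℝ)
    (hm : 0 < m) (W : Fin n → EuclideanSpace ℝ (Fin r)) (i : Fin n) :
    Qfun b m W = (1 / (2 * m)) * (b i i * ‖W i‖ ^ 2) + inner ℝ (W i) (gradBlock b m W i)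
      + (1 / (2 * m)) * ∑ x ∈ Finset.univ.erase i, ∑ y ∈ Finset.univ.erase i,
          b x y * inner ℝ (W x) (W y) := by
  unfold Qfun gradBlock
  simp only [inner_eq_sum', inner_smul_right, inner_sum]
  rw [← Finset.add_sum_erase _ _ (Finset.mem_univ i)]
  have h1 : ∀ x, ∑ j, b x j * inner ℝ (W x) (W j) = b x i * inner ℝ (W x) (W i)
      + ∑ j ∈ Finset.univ.erase i, b x j * inner ℝ (W x) (W j) := fun x =>
    (Finset.add_sum_erase _ _ (Finset.mem_univ i)).symm
  simp only [h1, Finset.sum_add_distrib]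
  have h2 : ∑ x ∈ Finset.univ.erase i, b x i * inner ℝ (W x) (W i)
      = ∑ x ∈ Finset.univ.erase i, b i x * inner ℝ (W i) (W x) := by
    refine Finset.sum_congr rfl fun x _ => ?_
    rw [hb x i, real_inner_comm]
  rw [h2, real_inner_self_eq_norm_sq]
  field_simp
  ring

theorem Q_diff {n r : ℕ} (b : Fin n → Fin n → ℝ) (hb : ∀ i j, b i j = b j i) (m : ℝ)
    (hm : 0 < m) (V : Fin n → EuclideanSpace ℝ (Fin r)) (i : Fin n)
    (u : EuclideanSpace ℝ (Fin r)) (hu : ‖u‖ = ‖V i‖) :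
    Qfun b m (Function.update V i u) - Qfun b m V
      = inner ℝ (u - V i) (gradBlock b m V i) := by
  rw [Q_split b hb m hm _ i, Q_split b hb m hm V i]
  have hne : ∀ x ∈ Finset.univ.erase i, Function.update V i u x = V x := fun x hx =>
    Function.update_of_ne (Finset.ne_of_mem_erase hx) _ _
  have hg : gradBlock b m (Function.update V i u) i = gradBlock b m V i := by
    unfold gradBlock
    congr 1
    exact Finset.sum_congr rfl fun x hx => by rw [hne x hx]
  have hs : ∑ x ∈ Finset.univ.erase i, ∑ y ∈ Finset.univ.erase i,
      b x y * inner ℝ (Function.update V i u x) (Function.update V i u y)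
      = ∑ x ∈ Finset.univ.erase i, ∑ y ∈ Finset.univ.erase i,
          b x y * inner ℝ (V x) (V y) :=
    Finset.sum_congr rfl fun x hx => Finset.sum_congr rfl fun y hy => by
      rw [hne x hx, hne y hy]
  rw [hg, hs, Function.update_self, hu, inner_sub_left]
  ring

theorem proj_bound {r : ℕ} (p v g : EuclideanSpace ℝ (Fin r))
    (h : ‖p - (v + g)‖ ≤ ‖v - (v + g)‖) : ‖p - v‖ ^ 2 ≤ 2 * inner ℝ (p - v) g := by
  have e1 : p - (v + g) = (p - v) - g := by abel
  have e2 : v - (v + g) = -g := by abel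
  rw [e1, e2, norm_neg] at h
  have := pow_le_pow_left₀ (norm_nonneg _) h 2
  rw [norm_sub_sq_real] at this
  linarith

theorem iter_snoc {n r t : ℕ}
    (sel : (Fin n → EuclideanSpace ℝ (Fin r)) → Fin n → EuclideanSpace ℝ (Fin r))
    (V0 : Fin n → EuclideanSpace ℝ (Fin r)) (s : Fin t → Fin n) (i : Fin n) :
    iter sel V0 ((List.finRange (t + 1)).map (Fin.snoc (α := fun _ => Fin n) s i))
      = Function.update (iter sel V0 ((List.finRange t).map s)) i
          (sel (iter sel V0 ((List.finRange t).map s)) i) := by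
  rw [List.finRange_succ_last]
  simp [iter, List.foldl_append, Function.comp_def]

theorem iter_feas {n r k : ℕ}
    (sel : (Fin n → EuclideanSpace ℝ (Fin r)) → Fin n → EuclideanSpace ℝ (Fin r))
    (hselmem : ∀ V i, sel V i ∈ feas r k) (l : List (Fin n)) :
    ∀ (V0 : Fin n → EuclideanSpace ℝ (Fin r)), (∀ i, V0 i ∈ feas r k) →
      ∀ i, iter sel V0 l i ∈ feas r k := by
  induction l with
  | nil => intro V0 h i; exact h i
  | cons a l ih =>
    intro V0 h i
    refine ih (Function.update V0 a (sel V0 a)) (fun j => ?_) i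
    by_cases hj : j = a
    · subst hj; rw [Function.update_self]; exact hselmem _ _
    · rw [Function.update_of_ne hj]; exact h j

theorem sum_snoc' {n t : ℕ} (f : (Fin (t + 1) → Fin n) → ℝ) :
    ∑ s, f s = ∑ s : Fin t → Fin n, ∑ i, f (Fin.snoc (α := fun _ => Fin n) s i) := by
  rw [← (Fin.snocEquiv (fun _ : Fin (t + 1) => Fin n)).sum_comp, Fintype.sum_prod_type,
    Finset.sum_comm]
  rfl

/-- Theorem 1 of the paper: Let `Q` be the generalized modularity
objective with symmetric `b` and `m > 0`, `Ω = Ω₁ × ⋯ × Ωₙ` the product of the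
low-cardinality feasible sets, and `Q* = max_{V ∈ Ω} Q(V)`. Starting from a feasible
`V⁰`, update at each step a uniformly random coordinate `i_t` by an exact maximizer
(measurable selection `sel`) of `Q` over block `i_t`; the expectation of
`‖grad(V^t)‖² = ‖P_Ω(V^t + ∇Q(V^t)) − V^t‖²` over the i.i.d. uniform indices
`i₀,…,i_{t−1}` is the average of `gradNormSq` over all `n^t` index sequences. Then for
every `T ≥ 1`, `min_{0 ≤ t < T} E[‖grad(V^t)‖²] ≤ (2n/T)(Q* − Q(V⁰))`; in particular
the expected squared projected gradient converges to zero at an `O(1/T)` rate. -/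
theorem stmt_17 {n r k : ℕ} (hn : 0 < n) (hr : 0 < r) (hk : 1 ≤ k) (hkr : k ≤ r)
    (b : Fin n → Fin n → ℝ) (hb : ∀ i j, b i j = b j i) (m : ℝ) (hm : 0 < m)
    (Qstar : ℝ)
    (hQstar : IsGreatest (Qfun b m '' {V : Fin n → EuclideanSpace ℝ (Fin r) |
      ∀ i, V i ∈ feas r k}) Qstar)
    (sel : (Fin n → EuclideanSpace ℝ (Fin r)) → Fin n → EuclideanSpace ℝ (Fin r))
    (hselmem : ∀ V i, sel V i ∈ feas r k)
    (hselmax : ∀ V i, ∀ u ∈ feas r k,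
      Qfun b m (Function.update V i u) ≤ Qfun b m (Function.update V i (sel V i)))
    (proj : Fin n → EuclideanSpace ℝ (Fin r) → EuclideanSpace ℝ (Fin r))
    (hprojmem : ∀ i z, proj i z ∈ feas r k)
    (hprojmin : ∀ i z, ∀ u ∈ feas r k, ‖proj i z - z‖ ≤ ‖u - z‖)
    (V0 : Fin n → EuclideanSpace ℝ (Fin r)) (hV0 : ∀ i, V0 i ∈ feas r k)
    (T : ℕ) (hT : 1 ≤ T) :
    ∃ t < T,
      (∑ s : Fin t → Fin n,
          gradNormSq b m proj (iter sel V0 ((List.finRange t).map s))) / (n : ℝ) ^ t ≤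
        (2 * n / T) * (Qstar - Qfun b m V0) := by
  have hn' : (0 : ℝ) < n := by exact_mod_cast hn
  have hT' : (0 : ℝ) < T := by exact_mod_cast hT
  set X : (t : ℕ) → (Fin t → Fin n) → Fin n → EuclideanSpace ℝ (Fin r) :=
    fun t s => iter sel V0 ((List.finRange t).map s) with hX
  have hXf : ∀ t s i, X t s i ∈ feas r k := fun t s => iter_feas sel hselmem _ V0 hV0
  -- one-step bound
  have step : ∀ V : Fin n → EuclideanSpace ℝ (Fin r), (∀ i, V i ∈ feas r k) →
      gradNormSq b m proj V ≤
        2 * (∑ i, Qfun b m (Function.update V i (sel V i)) - n * Qfun b m V) := by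
    intro V hV
    have e : (n : ℝ) * Qfun b m V = ∑ _i : Fin n, Qfun b m V := by simp
    rw [e, ← Finset.sum_sub_distrib, Finset.mul_sum]
    refine Finset.sum_le_sum fun i _ => ?_
    have h1 := proj_bound _ _ _ (hprojmin i (V i + gradBlock b m V i) (V i) (hV i))
    have hp := hprojmem i (V i + gradBlock b m V i)
    have h2 := Q_diff b hb m hm V i _ (hp.2.1.trans (hV i).2.1.symm)
    have h3 := hselmax V i _ hp
    linarith
  set E : ℕ → ℝ := fun t => (∑ s : Fin t → Fin n, Qfun b m (X t s)) / (n : ℝ) ^ t with hE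
  have hstep : ∀ t, (∑ s : Fin t → Fin n, gradNormSq b m proj (X t s)) / (n : ℝ) ^ t
      ≤ 2 * n * (E (t + 1) - E t) := by
    intro t
    have h1 : ∑ s : Fin t → Fin n, gradNormSq b m proj (X t s) ≤
        2 * (∑ s : Fin (t + 1) → Fin n, Qfun b m (X (t + 1) s)
          - n * ∑ s : Fin t → Fin n, Qfun b m (X t s)) := by
      rw [sum_snoc', Finset.mul_sum, ← Finset.sum_sub_distrib, Finset.mul_sum]
      refine Finset.sum_le_sum fun s _ => ?_
      have := step (X t s) (hXf t s)
      simp only [hX, iter_snoc] at this ⊢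
      exact this
    rw [div_le_iff₀ (by positivity)]
    refine h1.trans (le_of_eq ?_)
    simp only [hE]
    rw [pow_succ]
    field_simp
  have hE0 : E 0 = Qfun b m V0 := by
    simp [hE, hX, iter]
  have hET : E T ≤ Qstar := by
    simp only [hE]
    rw [div_le_iff₀ (by positivity)]
    calc _ ≤ ∑ _s : Fin T → Fin n, Qstar :=
          Finset.sum_le_sum fun s _ => hQstar.2 ⟨_, hXf T s, rfl⟩
      _ = _ := by simp [mul_comm]
  by_contra! hcon
  have hlt : ∑ t ∈ Finset.range T, (2 * n / T) * (Qstar - Qfun b m V0)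
      < ∑ t ∈ Finset.range T, 2 * n * (E (t + 1) - E t) := by
    refine Finset.sum_lt_sum_of_nonempty ⟨0, Finset.mem_range.2 hT⟩ fun t ht => ?_
    exact lt_of_lt_of_le (hcon t (Finset.mem_range.1 ht)) (hstep t)
  rw [Finset.sum_const, ← Finset.mul_sum, Finset.sum_range_sub, hE0, Finset.card_range,
    nsmul_eq_mul] at hlt
  have e : (T : ℝ) * ((2 * n / T) * (Qstar - Qfun b m V0))
      = 2 * n * (Qstar - Qfun b m V0) := by field_simp
  rw [e] at hlt
  have := lt_of_mul_lt_mul_left hlt (by positivity)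
  linarith
end

section
/- Let Ω ⊆ ℝ^d be a nonempty closed set, x, q ∈ ℝ^d, and α > 1. Suppose y₁ ∈ Ω minimizes ‖y − (x + q)‖₂ over Ω and y_α ∈ Ω minimizes ‖y − (x + αq)‖₂ over Ω. Then the following two inequalities hold: ‖y₁ − x‖₂² ≤ ‖y_α − x‖₂² − 2qᵀ(y_α − y₁) and ‖y_α − x‖₂² ≤ ‖y₁ − x‖₂² − 2αqᵀ(y₁ − y_α). -/
theorem proj_aux {d : ℕ} (x q a b : EuclideanSpace ℝ (Fin d)) (β : ℝ)
    (h : ‖a - (x + β • q)‖ ≤ ‖b - (x + β • q)‖) :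
    ‖a - x‖ ^ 2 ≤ ‖b - x‖ ^ 2 - 2 * β * ∑ t, q t * (b t - a t) := by
  have h2 : ‖a - (x + β • q)‖ ^ 2 ≤ ‖b - (x + β • q)‖ ^ 2 := by gcongr
  have hs : ∑ t, q t * (b t - a t) = inner ℝ (b - x) q - inner ℝ (a - x) q := by
    rw [← inner_sub_left, sub_sub_sub_cancel_right, PiLp.inner_apply]
    simp
  rw [← sub_sub, ← sub_sub, norm_sub_sq_real (a - x) (β • q), norm_sub_sq_real (b - x) (β • q), inner_smul_right,
    inner_smul_right] at h2
  rw [hs]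
  linarith

/-- equations (18) and (19) of the paper: For a nonempty closed set
`Ω ⊆ ℝ^d`, points `x, q ∈ ℝ^d` and `α > 1`, if `y₁` is a projection of `x + q` onto `Ω`
and `y_α` is a projection of `x + αq` onto `Ω`, then
`‖y₁ − x‖² ≤ ‖y_α − x‖² − 2qᵀ(y_α − y₁)` and
`‖y_α − x‖² ≤ ‖y₁ − x‖² − 2αqᵀ(y₁ − y_α)`. -/
theorem stmt_18 {d : ℕ} (Ω : Set (EuclideanSpace ℝ (Fin d)))
    (hΩclosed : IsClosed Ω) (hΩne : Ω.Nonempty)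
    (x q : EuclideanSpace ℝ (Fin d)) (α : ℝ) (hα : 1 < α)
    (y₁ : EuclideanSpace ℝ (Fin d)) (hy₁ : y₁ ∈ Ω)
    (hy₁min : ∀ y ∈ Ω, ‖y₁ - (x + q)‖ ≤ ‖y - (x + q)‖)
    (yα : EuclideanSpace ℝ (Fin d)) (hyα : yα ∈ Ω)
    (hyαmin : ∀ y ∈ Ω, ‖yα - (x + α • q)‖ ≤ ‖y - (x + α • q)‖) :
    ‖y₁ - x‖ ^ 2 ≤ ‖yα - x‖ ^ 2 - 2 * ∑ t, q t * (yα t - y₁ t) ∧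
    ‖yα - x‖ ^ 2 ≤ ‖y₁ - x‖ ^ 2 - 2 * α * ∑ t, q t * (y₁ t - yα t) := by
  refine ⟨?_, proj_aux x q yα y₁ α (hyαmin y₁ hy₁)⟩
  have h := proj_aux x q y₁ yα 1 (by simpa using hy₁min yα hyα)
  simpa using h
end
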